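/- Suppose S_σ = S_τ for finite words σ, τ over {1,…,m}. Then there exist a positive integer M and finite words σ₁,…,σ_M and τ₁,…,τ_M with σ_M = σ, τ_M = τ, such that for all 1 ≤ k ≤ M: σ_k is a prefix of σ, τ_k is a prefix of τ, p_{σ_k}, p_{τ_k} ∈ ((k−1)T, kT], and (p_{σ_k} − p_{τ_k}, λ^{−p_{τ_k}}(b_{σ_k} − b_{τ_k})) ∈ Ξ. -/

import Mathlib

open Polynomial Filter

noncomputable section

namespace PVOSC

variable {m : ℕ}

/-- `λ⁻¹` is a Pisot (P.V.) number: an algebraic integer `> 1` all of whose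
Galois conjugates other than itself have complex absolute value `< 1`. -/
def IsPisot (θ : ℝ) : Prop :=
  1 < θ ∧ IsIntegral ℤ θ ∧
    ∀ z : ℂ, aeval z (minpoly ℤ θ) = 0 → z ≠ (θ : ℂ) → ‖z‖ < 1

/-- `p_σ` for a finite word `σ`. -/
def wordP (p : Fin m → ℕ) (σ : List (Fin m)) : ℕ := (σ.map p).sum

/-- The contracting similitude `S_i(x) = λ^{p_i} x + b_i`. -/
def Smap (lam : ℝ) (p : Fin m → ℕ) (b : Fin m → ℝ) (i : Fin m) : ℝ → ℝ :=
  fun x => lam ^ p i * x + b i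

/-- `S_σ = S_{i₁} ∘ ⋯ ∘ S_{i_k}` for `σ = i₁ ⋯ i_k`. -/
def SW (lam : ℝ) (p : Fin m → ℕ) (b : Fin m → ℝ) (σ : List (Fin m)) : ℝ → ℝ :=
  σ.foldr (fun i f => Smap lam p b i ∘ f) id

/-- `b_σ`, the translation part of `S_σ`. -/
def wordB (lam : ℝ) (p : Fin m → ℕ) (b : Fin m → ℝ) (σ : List (Fin m)) : ℝ :=
  SW lam p b σ 0

/-- `B = {0, b₁, …, b_m}`. -/
def Bset (b : Fin m → ℝ) : Set ℝ := insert 0 (Set.range b)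

/-- `B − B`. -/
def BB (b : Fin m → ℝ) : Set ℝ := {x | ∃ u ∈ Bset b, ∃ v ∈ Bset b, x = u - v}

/-- `max_i |b_i|`. -/
def bmax (b : Fin m → ℝ) : ℝ := ⨆ i, |b i|

/-- The set `𝒞`. -/
def Cset (lam : ℝ) (b : Fin m → ℝ) (T : ℕ) : Set ℝ :=
  {x | |x| ≤ (1 + lam ^ (1 - (T : ℤ))) * bmax b / (1 - lam) ∧
    ∃ R : ℝ[X], (∀ n, R.coeff n ∈ BB b) ∧ lam ^ (2 - (T : ℤ)) * x = R.eval lam⁻¹}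

/-- The vertex set `Ξ = {n ∈ ℤ : |n| ≤ T−1} × 𝒞`. -/
def Xi (lam : ℝ) (b : Fin m → ℝ) (T : ℕ) : Set (ℤ × ℝ) :=
  {v | |v.1| ≤ (T : ℤ) - 1 ∧ v.2 ∈ Cset lam b T}

/-- The open set condition. -/
def OSC (lam : ℝ) (p : Fin m → ℕ) (b : Fin m → ℝ) : Prop :=
  ∃ U : Set ℝ, U.Nonempty ∧ IsOpen U ∧ (⋃ i, Smap lam p b i '' U) ⊆ U ∧
    ∀ i j : Fin m, i ≠ j → Smap lam p b i '' U ∩ Smap lam p b j '' U = ∅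

/-- The strong separation condition for the attractor `E`. -/
def SSC (lam : ℝ) (p : Fin m → ℕ) (b : Fin m → ℝ) (E : Set ℝ) : Prop :=
  ∀ i j : Fin m, i ≠ j → Smap lam p b i '' E ∩ Smap lam p b j '' E = ∅

/-- Group law on `ℤ × ℝ`: `(p₁,c₁)·(p₂,c₂) = (p₁+p₂, λ^{p₁} c₂ + c₁)`. -/
def gmul (lam : ℝ) (u v : ℤ × ℝ) : ℤ × ℝ := (u.1 + v.1, lam ^ u.1 * v.2 + u.2)

/-- Inverse for the group law: `(p,c)⁻¹ = (−p, −λ^{−p} c)`. -/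
def ginv (lam : ℝ) (u : ℤ × ℝ) : ℤ × ℝ := (-u.1, -(lam ^ (-u.1) * u.2))

/-- The group element `(p_σ, b_σ)` associated to a finite word `σ`. -/
def elem (lam : ℝ) (p : Fin m → ℕ) (b : Fin m → ℝ) (σ : List (Fin m)) : ℤ × ℝ :=
  ((wordP p σ : ℤ), wordB lam p b σ)

/-- The sequence `(q_k, c_k)` with the recursive structure w.r.t. `({α_k}, {β_k})`:
`recSeq … k = (q_{k+1}, c_{k+1})`, i.e. index `k` corresponds to `(q_{k+1}, c_{k+1})`. -/
def recSeq (lam : ℝ) (p : Fin m → ℕ) (b : Fin m → ℝ) (α β : ℕ → List (Fin m)) : ℕ → ℤ × ℝ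
  | 0 => gmul lam (ginv lam (elem lam p b (β 0))) (elem lam p b (α 0))
  | (k+1) => gmul lam (ginv lam (elem lam p b (β (k+1))))
      (gmul lam (recSeq lam p b α β k) (elem lam p b (α (k+1))))

/-- The edge relation of the directed graph `G` on `Ξ`. -/
def edge (lam : ℝ) (p : Fin m → ℕ) (b : Fin m → ℝ) (T : ℕ) (u v : ℤ × ℝ) : Prop :=
  u ∈ Xi lam b T ∧ v ∈ Xi lam b T ∧
    ∃ α β : List (Fin m), 1 ≤ wordP p α ∧ wordP p α ≤ 2 * T - 1 ∧
      1 ≤ wordP p β ∧ wordP p β ≤ 2 * T - 1 ∧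
      v.1 = (wordP p α : ℤ) + u.1 - (wordP p β : ℤ) ∧
      v.2 = lam ^ (-(wordP p β : ℤ)) * u.2 + lam ^ (u.1 - (wordP p β : ℤ)) * wordB lam p b α
        - lam ^ (-(wordP p β : ℤ)) * wordB lam p b β

/-- `Λ = Ξ ∩ {(p_j − p_i, λ^{−p_i}(b_j − b_i)) : i ≠ j}`. -/
def Lam (lam : ℝ) (p : Fin m → ℕ) (b : Fin m → ℝ) (T : ℕ) : Set (ℤ × ℝ) :=
  Xi lam b T ∩ {v | ∃ i j : Fin m, i ≠ j ∧
    v = ((p j : ℤ) - (p i : ℤ), lam ^ (-(p i : ℤ)) * (b j - b i))}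

/-- The length-`k` prefix of an infinite word `ω`. -/
def prefixList (ω : ℕ → Fin m) (k : ℕ) : List (Fin m) := (List.range k).map ω

lemma wordP_cons (p : Fin m → ℕ) (i : Fin m) (w : List (Fin m)) :
    wordP p (i :: w) = p i + wordP p w := by simp [wordP]

lemma wordP_append (p : Fin m → ℕ) (u w : List (Fin m)) :
    wordP p (u ++ w) = wordP p u + wordP p w := by simp [wordP]

lemma wordB_cons (lam : ℝ) (p : Fin m → ℕ) (b : Fin m → ℝ) (i : Fin m) (w : List (Fin m)) :
    wordB lam p b (i :: w) = lam ^ p i * wordB lam p b w + b i := by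
  simp [wordB, SW, Smap]

lemma wordB_nil (lam : ℝ) (p : Fin m → ℕ) (b : Fin m → ℝ) :
    wordB lam p b [] = 0 := by
  simp [wordB, SW]

lemma SW_eq (lam : ℝ) (p : Fin m → ℕ) (b : Fin m → ℝ) (w : List (Fin m)) (x : ℝ) :
    SW lam p b w x = lam ^ wordP p w * x + wordB lam p b w := by
  induction w with
  | nil => simp [SW, wordP, wordB]
  | cons i w ih =>
    rw [wordP_cons, wordB_cons]
    have : SW lam p b (i :: w) x = lam ^ p i * SW lam p b w x + b i := by
      simp [SW, Smap]
    rw [this, ih, pow_add]; ring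

lemma wordB_append (lam : ℝ) (p : Fin m → ℕ) (b : Fin m → ℝ) (u w : List (Fin m)) :
    wordB lam p b (u ++ w) = wordB lam p b u + lam ^ wordP p u * wordB lam p b w := by
  induction u with
  | nil => simp [wordB_nil, wordP]
  | cons i u ih =>
    rw [List.cons_append, wordB_cons, wordB_cons, ih, wordP_cons, pow_add]; ring

lemma wordB_bound (lam : ℝ) (h0 : 0 < lam) (h1 : lam < 1) (p : Fin m → ℕ)
    (hp : ∀ i, 1 ≤ p i) (b : Fin m → ℝ) (w : List (Fin m)) :
    |wordB lam p b w| ≤ bmax b / (1 - lam) := by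
  have hl : 0 < 1 - lam := by linarith
  have hb0 : 0 ≤ bmax b := Real.iSup_nonneg fun i => abs_nonneg _
  have hb : ∀ i, |b i| ≤ bmax b := fun i =>
    le_ciSup (f := fun i => |b i|) (Set.finite_range _).bddAbove i
  have hq : 0 ≤ bmax b / (1 - lam) := by positivity
  induction w with
  | nil => simpa [wordB_nil] using hq
  | cons i w ih =>
    rw [wordB_cons]
    have hle : lam ^ p i ≤ lam := by
      simpa using pow_le_pow_of_le_one h0.le h1.le (hp i)
    calc |lam ^ p i * wordB lam p b w + b i|
        ≤ |lam ^ p i * wordB lam p b w| + |b i| := abs_add_le _ _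
      _ = lam ^ p i * |wordB lam p b w| + |b i| := by
          rw [abs_mul, abs_of_pos (pow_pos h0 _)]
      _ ≤ lam * (bmax b / (1 - lam)) + bmax b := by
          gcongr
          exact hb i
      _ = bmax b / (1 - lam) := by field_simp; ring

lemma wordP_pos (p : Fin m → ℕ) (hp : ∀ i, 1 ≤ p i) (w : List (Fin m)) (hw : w ≠ []) :
    1 ≤ wordP p w := by
  cases w with
  | nil => exact absurd rfl hw
  | cons i w => rw [wordP_cons]; have := hp i; omega

lemma exists_poly (lam : ℝ) (h0 : 0 < lam) (p : Fin m → ℕ)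
    (hp : ∀ i, 1 ≤ p i) (b : Fin m → ℝ) (w : List (Fin m)) :
    ∀ n : ℕ, wordP p w ≤ n + 1 → ∃ Q : ℝ[X], (∀ k, Q.coeff k ∈ Bset b) ∧
      (∀ k, n < k → Q.coeff k = 0) ∧ Q.eval lam⁻¹ = lam⁻¹ ^ n * wordB lam p b w := by
  induction w with
  | nil =>
    intro n _
    exact ⟨0, fun k => Or.inl (by simp), by simp, by simp [wordB_nil]⟩
  | cons i w ih =>
    intro n hn
    rw [wordP_cons] at hn
    by_cases hw : w = []
    · subst hw
      refine ⟨C (b i) * X ^ n, ?_, ?_, ?_⟩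
      · intro k
        rw [coeff_C_mul_X_pow]
        split_ifs
        · exact Or.inr ⟨i, rfl⟩
        · exact Or.inl rfl
      · intro k hk
        rw [coeff_C_mul_X_pow, if_neg (by omega)]
      · rw [wordB_cons, wordB_nil, eval_mul, eval_C, eval_pow, eval_X]
        ring
    · have h1 := wordP_pos p hp w hw
      have hpi := hp i
      obtain ⟨Q, hQ1, hQ2, hQ3⟩ := ih (n - p i) (by omega)
      refine ⟨Q + C (b i) * X ^ n, ?_, ?_, ?_⟩
      · intro k
        rw [coeff_add, coeff_C_mul_X_pow]
        split_ifs with h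
        · rw [hQ2 k (by omega), zero_add]; exact Or.inr ⟨i, rfl⟩
        · simpa using hQ1 k
      · intro k hk
        rw [coeff_add, coeff_C_mul_X_pow, if_neg (by omega), hQ2 k (by omega)]; simp
      · have e : lam⁻¹ ^ n = lam⁻¹ ^ (n - p i) * lam⁻¹ ^ p i := by
          rw [← pow_add]; congr 1; omega
        have e2 : lam⁻¹ ^ p i * lam ^ p i = 1 := by
          rw [← mul_pow, inv_mul_cancel₀ h0.ne', one_pow]
        simp only [eval_add, eval_mul, eval_C, eval_pow, eval_X]
        rw [hQ3, wordB_cons, mul_add, e]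
        linear_combination (-(lam⁻¹ ^ (n - p i) * wordB lam p b w)) * e2

lemma exists_prefix (p : Fin m → ℕ) (T : ℕ) (hT : ∀ i, p i ≤ T) (w : List (Fin m)) :
    ∀ L : ℕ, ∃ s, s <+: w ∧ wordP p s ≤ L ∧
      (s = w ∨ (L < wordP p s + T ∧ L < wordP p w)) := by
  induction w with
  | nil => intro L; exact ⟨[], List.prefix_rfl, by simp [wordP], Or.inl rfl⟩
  | cons i w ih =>
    intro L
    by_cases h : p i ≤ L
    · obtain ⟨s, hs, h1, h2⟩ := ih (L - p i)
      refine ⟨i :: s, (List.prefix_cons_inj i).2 hs, by rw [wordP_cons]; omega, ?_⟩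
      rcases h2 with rfl | h2
      · exact Or.inl rfl
      · right; rw [wordP_cons, wordP_cons]; omega
    · have := hT i
      refine ⟨[], List.nil_prefix, by simp [wordP], Or.inr ⟨by omega, ?_⟩⟩
      rw [wordP_cons]; omega

theorem stmt8 (lam : ℝ) (hlam0 : 0 < lam) (hlam1 : lam < 1)
    (hPisot : IsPisot lam⁻¹)
    {m : ℕ} (hm : 2 ≤ m) (p : Fin m → ℕ) (hp : ∀ i, 1 ≤ p i)
    (b : Fin m → ℝ) (hbZ : ∀ i, ∃ z : ℤ, b i = (z : ℝ))
    (T : ℕ) (hT : T = Finset.univ.sup p)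
    (σ τ : List (Fin m)) (hσ : σ ≠ []) (hτ : τ ≠ [])
    (heq : SW lam p b σ = SW lam p b τ) :
    ∃ M : ℕ, 1 ≤ M ∧ ∃ σs τs : ℕ → List (Fin m),
      σs M = σ ∧ τs M = τ ∧
      ∀ k : ℕ, 1 ≤ k → k ≤ M →
        (σs k) <+: σ ∧ (τs k) <+: τ ∧
        (k - 1) * T < wordP p (σs k) ∧ wordP p (σs k) ≤ k * T ∧
        (k - 1) * T < wordP p (τs k) ∧ wordP p (τs k) ≤ k * T ∧
        ((wordP p (σs k) : ℤ) - (wordP p (τs k) : ℤ),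
          lam ^ (-(wordP p (τs k) : ℤ)) *
            (wordB lam p b (σs k) - wordB lam p b (τs k))) ∈ Xi lam b T := by
  have hpT : ∀ i, p i ≤ T := fun i => hT ▸ Finset.le_sup (Finset.mem_univ i)
  have hT1 : 1 ≤ T := le_trans (hp ⟨0, by omega⟩) (hpT ⟨0, by omega⟩)
  have hB : wordB lam p b σ = wordB lam p b τ := congrFun heq 0
  have hP : wordP p σ = wordP p τ := by
    have h1 := congrFun heq 1
    rw [SW_eq, SW_eq, hB] at h1
    have h2 : lam ^ wordP p σ = lam ^ wordP p τ := by linarith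
    exact (pow_right_injective₀ hlam0 hlam1.ne) h2
  have hN : 1 ≤ wordP p σ := wordP_pos p hp σ hσ
  choose f hf1 hf2 hf3 using exists_prefix p T hpT σ
  choose g hg1 hg2 hg3 using exists_prefix p T hpT τ
  set N := wordP p σ with hNdef
  have hdiv := Nat.div_add_mod (N - 1) T
  have hmod := Nat.mod_lt (N - 1) (show T > 0 by omega)
  generalize (N - 1) / T = d at hdiv
  have hdN : d * T < N := by rw [mul_comm]; omega
  have hNM : N ≤ (d + 1) * T := by rw [add_mul, mul_comm d T]; omega
  have key : ∀ (w s : List (Fin m)) (k : ℕ), wordP p w = N → 1 ≤ k → k ≤ d + 1 →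
      (s = w ∨ (k * T < wordP p s + T ∧ k * T < wordP p w)) →
      (k - 1) * T < wordP p s := by
    intro w s k hw hk1 hk2 h
    obtain ⟨j, rfl⟩ : ∃ j, k = j + 1 := ⟨k - 1, by omega⟩
    rw [Nat.add_sub_cancel]
    rcases h with rfl | h
    · have : j * T ≤ d * T := Nat.mul_le_mul_right T (by omega)
      omega
    · rw [add_mul] at h; omega
  refine ⟨d + 1, by omega, fun k => f (k * T), fun k => g (k * T), ?_, ?_, ?_⟩
  · rcases hf3 ((d + 1) * T) with h | h
    · exact h
    · exact absurd h.2 (by omega)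
  · rcases hg3 ((d + 1) * T) with h | h
    · exact h
    · exact absurd h.2 (by omega)
  intro k hk1 hk2
  have a1 := key σ _ k rfl hk1 hk2 (hf3 (k * T))
  have a2 := key τ _ k hP.symm hk1 hk2 (hg3 (k * T))
  refine ⟨hf1 _, hg1 _, a1, hf2 _, a2, hg2 _, ?_⟩
  beta_reduce
  beta_reduce at a1 a2
  have a3 := hf2 (k * T)
  have a4 := hg2 (k * T)
  obtain ⟨s', hs'⟩ := hf1 (k * T)
  obtain ⟨t', ht'⟩ := hg1 (k * T)
  generalize f (k * T) = s at *
  generalize g (k * T) = t at *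
  have hkT : k * T = (k - 1) * T + T := by
    obtain ⟨j, rfl⟩ : ∃ j, k = j + 1 := ⟨k - 1, by omega⟩
    simp [add_mul]
  have hst : wordP p s + 1 ≤ wordP p t + T := by omega
  have hts : wordP p t + 1 ≤ wordP p s + T := by omega
  refine ⟨?_, ?_, ?_⟩
  · show |(wordP p s : ℤ) - (wordP p t : ℤ)| ≤ (T : ℤ) - 1
    rw [abs_le]; omega
  · show |lam ^ (-(wordP p t : ℤ)) * (wordB lam p b s - wordB lam p b t)| ≤ _
    have e1 : wordB lam p b s - wordB lam p b t
        = lam ^ wordP p t * wordB lam p b t' - lam ^ wordP p s * wordB lam p b s' := by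
      rw [← hs', ← ht', wordB_append, wordB_append] at hB
      linarith
    have e2 : lam ^ (-(wordP p t : ℤ)) * (wordB lam p b s - wordB lam p b t)
        = wordB lam p b t' - lam ^ ((wordP p s : ℤ) - wordP p t) * wordB lam p b s' := by
      rw [e1, zpow_sub₀ hlam0.ne', zpow_neg, zpow_natCast, zpow_natCast]
      have := pow_pos hlam0 (wordP p t)
      field_simp
    have hle : lam ^ ((wordP p s : ℤ) - wordP p t) ≤ lam ^ (1 - (T : ℤ)) :=
      zpow_le_zpow_right_of_le_one₀ hlam0 hlam1.le (by omega)
    have b1 := wordB_bound lam hlam0 hlam1 p hp b s'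
    have b2 := wordB_bound lam hlam0 hlam1 p hp b t'
    rw [e2]
    calc _ ≤ |wordB lam p b t'| + |lam ^ ((wordP p s : ℤ) - wordP p t) * wordB lam p b s'| :=
          abs_sub _ _
      _ = |wordB lam p b t'| + lam ^ ((wordP p s : ℤ) - wordP p t) * |wordB lam p b s'| := by
          rw [abs_mul, abs_of_pos (zpow_pos hlam0 _)]
      _ ≤ bmax b / (1 - lam) + lam ^ (1 - (T : ℤ)) * (bmax b / (1 - lam)) := by
          have := zpow_pos hlam0 (1 - (T : ℤ))
          gcongr
      _ = _ := by ring
  · obtain ⟨Q, hQ1, -, hQ3⟩ := exists_poly lam hlam0 p hp b s (T + wordP p t - 2) (by omega)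
    obtain ⟨R, hR1, -, hR3⟩ := exists_poly lam hlam0 p hp b t (T + wordP p t - 2) (by omega)
    refine ⟨Q - R, fun n => ⟨_, hQ1 n, _, hR1 n, by simp⟩, ?_⟩
    rw [eval_sub, hQ3, hR3, ← mul_sub]
    show lam ^ (2 - (T : ℤ)) * (lam ^ (-(wordP p t : ℤ)) * _) = _
    rw [← mul_assoc, ← zpow_add₀ hlam0.ne', inv_pow, ← zpow_natCast, ← zpow_neg]
    congr 2
    omega

end PVOSC
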